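/- arXiv:2503.04547 — 2 statements merged into one kernel-verified Lean document; each statement's English description precedes it below -/
import Mathlib

section
/- Let m := p−b−1 ≥ 1, let S ⊆ {1,…,b+m} with #S = m, and let 2 ≤ ℓ ≤ b+m+1 = p. Then ρ(g·φ_{S,∅}) = ( ∏_{i ∈ {1,…,ℓ}∖S} (n_i − 1)/n_i ) · ξ_S. -/
open Finset MvPolynomial

noncomputable section

/-- Value of the elementary symmetric polynomial `e_k` at the family `v` restricted to `A`. -/
def esymVal {α F : Type*} [DecidableEq α] [CommRing F] (A : Finset α) (k : ℕ) (v : α → F) : F :=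
  ∑ B ∈ A.powersetCard k, ∏ i ∈ B, v i

/-- Pochhammer symbol `(a)_k = a (a+1) ⋯ (a+k-1)`. -/
def poch (a : ℚ) (k : ℕ) : ℚ := ∏ i ∈ Finset.range k, (a + (i : ℚ))

variable {p : ℕ}

/-- The index in `Fin (∑ t, n t)` of the `i`-th element of the `j`-th consecutive block. -/
def emb (n : Fin p → ℕ) (j : Fin p) (i : Fin (n j)) : Fin (∑ t, n t) :=
  ⟨(∑ t ∈ Finset.univ.filter (fun t => t < j), n t) + i, by
    have hj : j ∉ Finset.univ.filter (fun t => t < j) := by simp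
    have h2 : ∑ t ∈ insert j (Finset.univ.filter (fun t => t < j)), n t ≤ ∑ t, n t :=
      Finset.sum_le_sum_of_subset (Finset.subset_univ _)
    rw [Finset.sum_insert hj] at h2
    have := i.isLt
    omega⟩

/-- The Young subgroup: permutations mapping each block onto itself. -/
def youngGroup (n : Fin p → ℕ) : Finset (Equiv.Perm (Fin (∑ t, n t))) :=
  Finset.univ.filter fun w => ∀ (j : Fin p) (i : Fin (n j)), ∃ i' : Fin (n j),
    w (emb n j i) = emb n j i'

/-- The action of a permutation of the variables on polynomials, as a linear map. -/
def permAct {σ : Type*} (w : Equiv.Perm σ) :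
    MvPolynomial σ ℚ →ₗ[ℚ] MvPolynomial σ ℚ :=
  (MvPolynomial.rename ⇑w).toLinearMap

/-- Averaging operator over the Young subgroup. -/
def rho (n : Fin p → ℕ) :
    MvPolynomial (Fin (∑ t, n t)) ℚ →ₗ[ℚ] MvPolynomial (Fin (∑ t, n t)) ℚ :=
  ((youngGroup n).card : ℚ)⁻¹ • ∑ h ∈ youngGroup n, permAct h

/-- The alternating (Vandermonde) polynomial in the variables `x_{t 0}, …, x_{t b}`. -/
def Delta {N b : ℕ} (t : Fin (b + 1) → Fin N) : MvPolynomial (Fin N) ℚ :=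
  ∏ q ∈ Finset.univ.filter (fun q : Fin (b + 1) × Fin (b + 1) => q.1 < q.2),
    (X (t q.1) - X (t q.2))

/-- The span of all `Δ(x_{i₁},…,x_{i_{b+1}})` with `i₁ < ⋯ < i_{b+1}`. -/
def hookSpan (N b : ℕ) : Submodule ℚ (MvPolynomial (Fin N) ℚ) :=
  Submodule.span ℚ {f | ∃ t : Fin (b + 1) → Fin N, StrictMono t ∧ f = Delta t}

/-- The first `ℓ` block labels. -/
def firstL (p ℓ : ℕ) : Finset (Fin p) := Finset.univ.filter fun i => (i : ℕ) < ℓ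


/-- The `(b+1)`-tuple of variable indices with block labels the elements of `J` in increasing
order, and coordinate inside block `j` chosen by `c`. -/
def tupleOf (n : Fin p → ℕ) {b : ℕ} (J : Finset (Fin p)) (hJ : J.card = b + 1)
    (c : ∀ j : ↥J, Fin (n j.1)) : Fin (b + 1) → Fin (∑ t, n t) :=
  fun r => emb n (J.orderIsoOfFin hJ r).1 (c (J.orderIsoOfFin hJ r))

/-- The invariant polynomial `ξ_S`, where `J` is the complement of `S` (with `p` adjoined):
the sum of `Δ(x)` over all tuples with block labels `J` in increasing order. -/
def xiS (n : Fin p → ℕ) {b : ℕ} (J : Finset (Fin p)) (hJ : J.card = b + 1) :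
    MvPolynomial (Fin (∑ t, n t)) ℚ :=
  ∑ c : (∀ j : ↥J, Fin (n j.1)), Delta (tupleOf n J hJ c)

/-- The partial sum `φ_{S,E}` of `ξ_S`: only tuples whose coordinate in block `j` is the first
one for `j ∈ E`, and is not the first one for `j ∉ E` with `j` among the first `ℓ` blocks. -/
def phiSE (n : Fin p → ℕ) {b : ℕ} (ℓ : ℕ) (J E : Finset (Fin p)) (hJ : J.card = b + 1) :
    MvPolynomial (Fin (∑ t, n t)) ℚ :=
  ∑ c ∈ Finset.univ.filter (fun c : ∀ j : ↥J, Fin (n j.1) =>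
      ∀ j : ↥J, (j.1 ∈ E → (c j : ℕ) = 0) ∧ ((j.1 : ℕ) < ℓ → j.1 ∉ E → (c j : ℕ) ≠ 0)),
    Delta (tupleOf n J hJ c)

/-!
The cycle `g` moves only the first variable of each of the first `ℓ` blocks, and none of these
occurs in `φ_{S,∅}`, so `g·φ_{S,∅} = φ_{S,∅}`. The Young subgroup acts transitively on the tuples
with block labels `J`; hence `ρ` takes the same value on each `Δ(x)`, namely `ξ_S` divided by the
number of tuples. It remains to count the tuples occurring in `φ_{S,∅}`.
-/

section

theorem exists_perm_apply_eq {ι : Type*} {α : ι → Type*} {q : ι → Prop}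
    (c c' : ∀ j : Subtype q, α j) :
    ∃ s : ∀ i, Equiv.Perm (α i), ∀ j : Subtype q, s j (c j) = c' j := by
  classical
  have hswap (i : ι) : ∃ s : Equiv.Perm (α i), ∀ h : q i, s (c ⟨i, h⟩) = c' ⟨i, h⟩ := by
    by_cases h : q i
    · exact ⟨Equiv.swap (c ⟨i, h⟩) (c' ⟨i, h⟩), fun _ => Equiv.swap_apply_left _ _⟩
    · exact ⟨1, fun h' => absurd h' h⟩
  choose s hs using hswap
  exact ⟨s, fun j => hs j j.2⟩

theorem card_filter_imp_val_ne_zero (k : ℕ) (q : Prop) [Decidable q] :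
    #{i : Fin k | q → (i : ℕ) ≠ 0} = if q then k - 1 else k := by
  cases k with
  | zero => simp
  | succ k =>
    by_cases hq : q
    · simp [hq, Finset.filter_ne']
    · simp [hq]

theorem permAct_permAct {σ : Type*} (v w : Equiv.Perm σ) (f : MvPolynomial σ ℚ) :
    permAct v (permAct w f) = permAct (v * w) f :=
  rename_rename w v f

theorem permAct_Delta {N b : ℕ} (w : Equiv.Perm (Fin N)) (t : Fin (b + 1) → Fin N) :
    permAct w (Delta t) = Delta (w ∘ t) := by
  simp [permAct, Delta, map_prod]

variable {n : Fin p → ℕ}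

theorem emb_eq_finSigmaFinEquiv (j : Fin p) (i : Fin (n j)) :
    emb n j i = finSigmaFinEquiv ⟨j, i⟩ := by
  have hmap : ({t | t < j} : Finset (Fin p)) = Finset.univ.map (Fin.castLEEmb j.2.le) := by
    ext t
    simp only [Finset.mem_map, Finset.mem_univ, true_and, Finset.mem_filter]
    exact ⟨fun ht => ⟨⟨t, ht⟩, rfl⟩, by rintro ⟨a, rfl⟩; exact a.2⟩
  ext
  simp [emb, hmap]

theorem emb_eq_emb_iff {j k : Fin p} {i : Fin (n j)} {i' : Fin (n k)} :
    emb n j i = emb n k i' ↔ j = k ∧ (i : ℕ) = i' := by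
  rw [emb_eq_finSigmaFinEquiv, emb_eq_finSigmaFinEquiv, finSigmaFinEquiv.apply_eq_iff_eq,
    Sigma.mk.injEq]
  refine and_congr_right ?_
  rintro rfl
  rw [heq_eq_eq, Fin.ext_iff]

variable (n) in
/-- The embedding of `∏ⱼ S_{nⱼ}` into `S_N`, the `j`-th factor permuting the `j`-th block. Its
range is the Young subgroup; `youngGroup` is only its underlying `Finset`. -/
def blockPerm : (∀ j, Equiv.Perm (Fin (n j))) →* Equiv.Perm (Fin (∑ t, n t)) :=
  finSigmaFinEquiv.permCongrHom.toMonoidHom.comp (Equiv.Perm.sigmaCongrRightHom _)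

theorem blockPerm_emb (s : ∀ j, Equiv.Perm (Fin (n j))) (j : Fin p) (i : Fin (n j)) :
    blockPerm n s (emb n j i) = emb n j (s j i) := by
  simp [blockPerm, emb_eq_finSigmaFinEquiv]

theorem mem_youngGroup_iff {w : Equiv.Perm (Fin (∑ t, n t))} :
    w ∈ youngGroup n ↔ w ∈ (blockPerm n).range := by
  simp only [youngGroup, Finset.mem_filter, Finset.mem_univ, true_and, MonoidHom.mem_range]
  constructor
  · intro hw
    choose s hs using hw
    have hs_inj (j : Fin p) : Function.Injective (s j) := fun i i' h => by
      have hemb : emb n j i = emb n j i' := w.injective (by rw [hs, hs, h])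
      exact Fin.ext (emb_eq_emb_iff.1 hemb).2
    refine ⟨fun j => .ofBijective (s j) (hs_inj j).bijective_of_finite, Equiv.ext fun a => ?_⟩
    obtain ⟨⟨j, i⟩, rfl⟩ := finSigmaFinEquiv.surjective a
    rw [← emb_eq_finSigmaFinEquiv, blockPerm_emb, hs, Equiv.ofBijective_apply]
  · rintro ⟨s, rfl⟩ j i
    exact ⟨s j i, blockPerm_emb s j i⟩

theorem rho_permAct {w : Equiv.Perm (Fin (∑ t, n t))} (hw : w ∈ youngGroup n)
    (f : MvPolynomial (Fin (∑ t, n t)) ℚ) : rho n (permAct w f) = rho n f := by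
  simp only [rho, LinearMap.smul_apply, LinearMap.sum_apply, permAct_permAct]
  congr 1
  refine Finset.sum_equiv (Equiv.mulRight w) (fun h => ?_) fun _ _ => rfl
  rw [mem_youngGroup_iff] at hw
  rw [Equiv.coe_mulRight, mem_youngGroup_iff, mem_youngGroup_iff,
    Subgroup.mul_mem_cancel_right _ hw]

theorem rho_eq_self_of_forall_permAct_eq {f : MvPolynomial (Fin (∑ t, n t)) ℚ}
    (hf : ∀ w ∈ youngGroup n, permAct w f = f) : rho n f = f := by
  have hcard : ((youngGroup n).card : ℚ) ≠ 0 :=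
    Nat.cast_ne_zero.2 (Finset.card_ne_zero_of_mem (mem_youngGroup_iff.2 (one_mem _)))
  rw [rho, LinearMap.smul_apply, LinearMap.sum_apply, Finset.sum_congr rfl hf, Finset.sum_const,
    ← Nat.cast_smul_eq_nsmul ℚ, inv_smul_smul₀ hcard]

variable {b : ℕ} {J : Finset (Fin p)} (hJ : J.card = b + 1)

theorem permAct_blockPerm_Delta_tupleOf (s : ∀ j, Equiv.Perm (Fin (n j)))
    (c : ∀ j : J, Fin (n j)) :
    permAct (blockPerm n s) (Delta (tupleOf n J hJ c))
      = Delta (tupleOf n J hJ fun j => s j (c j)) := by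
  rw [permAct_Delta]
  exact congrArg Delta (funext fun r => blockPerm_emb s _ _)

theorem permAct_xiS {w : Equiv.Perm (Fin (∑ t, n t))} (hw : w ∈ youngGroup n) :
    permAct w (xiS n J hJ) = xiS n J hJ := by
  obtain ⟨s, rfl⟩ := mem_youngGroup_iff.1 hw
  simp only [xiS, map_sum, permAct_blockPerm_Delta_tupleOf]
  exact Equiv.sum_comp (Equiv.piCongrRight fun j : J => s j)
    fun c => Delta (tupleOf n J hJ c)

theorem rho_Delta_tupleOf_eq_rho_Delta_tupleOf (c c' : ∀ j : J, Fin (n j)) :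
    rho n (Delta (tupleOf n J hJ c)) = rho n (Delta (tupleOf n J hJ c')) := by
  obtain ⟨s, hs⟩ := exists_perm_apply_eq (α := fun j => Fin (n j)) c c'
  have hmem : blockPerm n s ∈ youngGroup n := mem_youngGroup_iff.2 ⟨s, rfl⟩
  rw [← rho_permAct hmem, permAct_blockPerm_Delta_tupleOf, funext hs]

theorem rho_Delta_tupleOf (c : ∀ j : J, Fin (n j)) :
    rho n (Delta (tupleOf n J hJ c)) = (∏ j : J, (n j : ℚ))⁻¹ • xiS n J hJ := by
  have hprod : ∏ j : J, (n j : ℚ) ≠ 0 :=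
    Finset.prod_ne_zero_iff.2 fun j _ => Nat.cast_ne_zero.2 (c j).pos.ne'
  rw [eq_comm, inv_smul_eq_iff₀ hprod]
  calc xiS n J hJ = rho n (xiS n J hJ) :=
        (rho_eq_self_of_forall_permAct_eq fun _ hw => permAct_xiS hJ hw).symm
    _ = ∑ c' : ∀ j : J, Fin (n j), rho n (Delta (tupleOf n J hJ c')) := by
        rw [xiS, map_sum]
    _ = ∑ _c' : ∀ j : J, Fin (n j), rho n (Delta (tupleOf n J hJ c)) :=
        Finset.sum_congr rfl fun c' _ => rho_Delta_tupleOf_eq_rho_Delta_tupleOf hJ c' c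
    _ = (∏ j : J, (n j : ℚ)) • rho n (Delta (tupleOf n J hJ c)) := by
        simp [← Nat.cast_smul_eq_nsmul ℚ]

theorem rho_sum_Delta_piFinset (A : ∀ j : J, Finset (Fin (n j))) :
    rho n (∑ c ∈ Fintype.piFinset A, Delta (tupleOf n J hJ c))
      = (∏ j : J, (#(A j) : ℚ) / n j) • xiS n J hJ := by
  simp only [map_sum, rho_Delta_tupleOf, Finset.sum_const, ← Nat.cast_smul_eq_nsmul ℚ, smul_smul,
    Fintype.card_piFinset, Nat.cast_prod, Finset.prod_div_distrib, ← div_eq_mul_inv]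

theorem phiSE_empty (ℓ : ℕ) :
    phiSE n ℓ J ∅ hJ
      = ∑ c ∈ Fintype.piFinset fun j : J => {i : Fin (n j) | (j : ℕ) < ℓ → (i : ℕ) ≠ 0},
          Delta (tupleOf n J hJ c) := by
  rw [phiSE]
  congr 1
  ext c
  simp [Fintype.mem_piFinset]

theorem permAct_phiSE_empty {ℓ : ℕ} {g : Equiv.Perm (Fin (∑ t, n t))}
    (hg : ∀ j ∈ J, ∀ i : Fin (n j), ((j : ℕ) < ℓ → (i : ℕ) ≠ 0) → g (emb n j i) = emb n j i) :
    permAct g (phiSE n ℓ J ∅ hJ) = phiSE n ℓ J ∅ hJ := by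
  rw [phiSE_empty, map_sum]
  refine Finset.sum_congr rfl fun c hc => ?_
  rw [permAct_Delta]
  refine congrArg Delta (funext fun r => hg _ (J.orderIsoOfFin hJ r).2 _ ?_)
  exact (Finset.mem_filter.1 (Fintype.mem_piFinset.1 hc _)).2

theorem rho_phiSE_empty (ℓ : ℕ) (hn : ∀ j ∈ J, 0 < n j) :
    rho n (phiSE n ℓ J ∅ hJ)
      = (∏ j ∈ firstL p ℓ ∩ J, ((n j : ℚ) - 1) / (n j : ℚ)) • xiS n J hJ := by
  have hratio (j : Fin p) (hj : j ∈ J) :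
      ((if (j : ℕ) < ℓ then n j - 1 else n j : ℕ) : ℚ) / n j
        = if (j : ℕ) < ℓ then ((n j : ℚ) - 1) / n j else 1 := by
    split_ifs
    · rw [Nat.cast_pred (hn j hj)]
    · exact div_self (Nat.cast_ne_zero.2 (hn j hj).ne')
  have hfirst : firstL p ℓ ∩ J = J.filter fun j : Fin p => (j : ℕ) < ℓ := by
    rw [firstL, Finset.filter_inter, Finset.univ_inter]
  simp only [phiSE_empty, rho_sum_Delta_piFinset, card_filter_imp_val_ne_zero]
  rw [Finset.prod_coe_sort J fun j => ((if (j : ℕ) < ℓ then n j - 1 else n j : ℕ) : ℚ) / n j,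
    Finset.prod_congr rfl hratio, hfirst, Finset.prod_filter]

theorem rho_g_phi_S_empty_general (ℓ : ℕ) (hn : ∀ j ∈ J, 0 < n j)
    {g : Equiv.Perm (Fin (∑ t, n t))}
    (hg : ∀ j ∈ J, ∀ i : Fin (n j), ((j : ℕ) < ℓ → (i : ℕ) ≠ 0) → g (emb n j i) = emb n j i) :
    rho n (permAct g (phiSE n ℓ J ∅ hJ))
      = (∏ j ∈ firstL p ℓ ∩ J, ((n j : ℚ) - 1) / (n j : ℚ)) • xiS n J hJ := by
  rw [permAct_phiSE_empty hJ hg, rho_phiSE_empty hJ ℓ hn]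

end

/-- Proposition 5.7: for `m ≥ 1`, `S ⊆ {1,…,b+m}` with `#S = m`, and `2 ≤ ℓ ≤ p`,
`ρ(g·φ_{S,∅}) = (∏_{i ∈ {1,…,ℓ}∖S} (n_i-1)/n_i) · ξ_S`. -/
theorem rho_g_phi_S_empty (p b ℓ : ℕ) (n : Fin p → ℕ) (hn : ∀ j, 0 < n j)
    (hm : b + 2 ≤ p) (hℓ2 : 2 ≤ ℓ) (hℓp : ℓ ≤ p)
    (g : Equiv.Perm (Fin (∑ t, n t)))
    (hg1 : ∀ j k : Fin p, (k : ℕ) = (j : ℕ) + 1 → (k : ℕ) < ℓ →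
      g (emb n j ⟨0, hn j⟩) = emb n k ⟨0, hn k⟩)
    (hg2 : ∀ j j' : Fin p, (j : ℕ) = ℓ - 1 → (j' : ℕ) = 0 →
      g (emb n j ⟨0, hn j⟩) = emb n j' ⟨0, hn j'⟩)
    (hg3 : ∀ a, (∀ j : Fin p, (j : ℕ) < ℓ → a ≠ emb n j ⟨0, hn j⟩) → g a = a)
    (S : Finset (Fin p)) (hS : ∀ j ∈ S, (j : ℕ) < p - 1)
    (hScard : S.card = p - b - 1) (hJ : Sᶜ.card = b + 1) :
    rho n (permAct g (phiSE n ℓ Sᶜ ∅ hJ))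
      = (∏ i ∈ firstL p ℓ \ S, ((n i : ℚ) - 1) / (n i : ℚ)) • xiS n Sᶜ hJ := by
  rw [Finset.sdiff_eq_inter_compl]
  refine rho_g_phi_S_empty_general hJ ℓ (fun j _ => hn j) fun j _ i hi => hg3 _ fun k hk h => ?_
  obtain ⟨rfl, hi0⟩ := emb_eq_emb_iff.1 h
  exact hi hk hi0

end
end

section
/- Let b ≥ 0, m ≥ 1, set ℓ := b+m+1, and let n_1,…,n_ℓ be positive integers. Then Σ_{S ⊆ {1,…,b+m}, #S = m} ∏_{i ∈ {1,…,ℓ}∖S} (n_i − 1)/n_i = ((n_ℓ − 1)/(n_1⋯n_ℓ)) · Σ_{k=0}^{m} ((b+1)_{m−k}/(m−k)!) · e_{ℓ−1−k}(n_1−1,…,n_{ℓ−1}−1). -/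
noncomputable section

/-!
After clearing denominators and pulling out the factor `n ℓ - 1`, the sum over `S` is the
coefficient of `X ^ m` in `∏ i, (X * n i + (n i - 1))`, with `i` running over `{1, …, b + m}`.
Each factor equals `(1 + X) * (n i - 1) + X`, so the product also equals
`∑ k, (1 + X) ^ (b + m - k) * X ^ k * e_{b+m-k}(n - 1)`. Its `X ^ m` coefficient is the sum of
`(b + m - k).choose (m - k) * e_{b+m-k}(n - 1)`, and `(b + 1)_j / j! = (b + j).choose j`.
-/

open Finset Polynomial

theorem poch_natCast (a k : ℕ) : poch (a : ℚ) k = (a.ascFactorial k : ℚ) := by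
  simp [poch, Nat.ascFactorial_eq_prod_range]

theorem poch_natCast_add_one_div_factorial (b k : ℕ) :
    poch ((b : ℚ) + 1) k / (k.factorial : ℚ) = ((b + k).choose k : ℚ) := by
  rw [← Nat.cast_add_one, poch_natCast, Nat.ascFactorial_eq_factorial_mul_choose, Nat.cast_mul,
    mul_div_cancel_left₀ _ (Nat.cast_ne_zero.mpr k.factorial_ne_zero)]

theorem coeff_prod_X_mul_C_add_C {α R : Type*} [DecidableEq α] [CommSemiring R] (A : Finset α)
    (u v : α → R) (m : ℕ) :
    (∏ i ∈ A, (X * C (u i) + C (v i))).coeff m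
      = ∑ S ∈ A.powersetCard m, (∏ i ∈ S, u i) * ∏ i ∈ A \ S, v i := by
  have coeff_term (S : Finset α) :
      ((∏ i ∈ S, X * C (u i)) * ∏ i ∈ A \ S, C (v i)).coeff m
        = if #S = m then (∏ i ∈ S, u i) * ∏ i ∈ A \ S, v i else 0 := by
    rw [prod_mul_distrib, prod_const, ← map_prod, ← map_prod, mul_assoc, ← C_mul, mul_comm,
      coeff_C_mul_X_pow]
    simp only [eq_comm]
  simp only [prod_add, finsetSum_coeff, coeff_term]
  rw [← sum_filter, powersetCard_eq_filter]

section CommRing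

variable {α R : Type*} [DecidableEq α] [CommRing R]

theorem prod_mul_add_const_eq_sum_esymVal (A : Finset α) (r c : R) (x : α → R) :
    ∏ i ∈ A, (r * x i + c)
      = ∑ j ∈ range (#A + 1), r ^ j * c ^ (#A - j) * esymVal A j x := by
  simp only [prod_add, sum_powerset, esymVal, mul_sum]
  refine sum_congr rfl fun j _ => sum_congr rfl fun S hS => ?_
  obtain ⟨hSA, rfl⟩ := mem_powersetCard.mp hS
  rw [prod_mul_distrib, prod_const, prod_const, card_sdiff_of_subset hSA]
  ring

theorem map_esymVal {T : Type*} [CommRing T] (f : R →+* T) (A : Finset α) (k : ℕ) (x : α → R) :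
    f (esymVal A k x) = esymVal A k (fun i => f (x i)) := by
  simp [esymVal]

theorem sum_powersetCard_prod_add_one_mul_prod_sdiff {A : Finset α} {m : ℕ} (hm : m ≤ #A)
    (x : α → R) :
    ∑ S ∈ A.powersetCard m, (∏ i ∈ S, (x i + 1)) * ∏ i ∈ A \ S, x i
      = ∑ k ∈ range (m + 1), ((#A - k).choose (m - k) : R) * esymVal A (#A - k) x := by
  have factor (i : α) : X * C (x i + 1) + C (x i) = (1 + X) * C (x i) + X := by
    rw [C_add, C_1]
    ring
  have expand : ∏ i ∈ A, ((1 + X) * C (x i) + X)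
      = ∑ k ∈ range (#A + 1), C (esymVal A (#A - k) x) * (1 + X) ^ (#A - k) * X ^ k := by
    rw [prod_mul_add_const_eq_sum_esymVal, ← sum_range_reflect]
    refine sum_congr rfl fun k hk => ?_
    rw [Nat.add_sub_cancel, Nat.sub_sub_self (mem_range_succ_iff.mp hk), ← map_esymVal]
    ring
  have range_filter_le : {k ∈ range (#A + 1) | k ≤ m} = range (m + 1) := by grind
  calc
    _ = (∏ i ∈ A, ((1 + X) * C (x i) + X)).coeff m := by
      simp only [← factor, coeff_prod_X_mul_C_add_C]
    _ = ∑ k ∈ range (#A + 1),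
          if k ≤ m then esymVal A (#A - k) x * ((#A - k).choose (m - k) : R) else 0 := by
      simp only [expand, finsetSum_coeff, coeff_mul_X_pow', coeff_C_mul, coeff_one_add_X_pow]
    _ = _ := by
      rw [← sum_filter, range_filter_le]
      exact sum_congr rfl fun k _ => mul_comm _ _

end CommRing

theorem prod_sdiff_div_eq {α G : Type*} [DecidableEq α] [CommGroupWithZero G] {A S : Finset α}
    (hSA : S ⊆ A) (f : α → G) {g : α → G} (hg : ∀ i ∈ S, g i ≠ 0) :
    ∏ i ∈ A \ S, f i / g i = ((∏ i ∈ S, g i) * ∏ i ∈ A \ S, f i) / ∏ i ∈ A, g i := by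
  rw [prod_div_distrib, ← prod_sdiff hSA, mul_comm (∏ i ∈ S, g i),
    mul_div_mul_right _ _ (prod_ne_zero_iff.mpr hg)]

theorem sum_over_S_eq_top_general {α F : Type*} [DecidableEq α] [Field F] {b m : ℕ}
    {A : Finset α} (hA : #A = b + m) {a : α} (ha : a ∉ A) (n : α → F)
    (hn : ∀ i ∈ insert a A, n i ≠ 0) :
    ∑ S ∈ A.powersetCard m, ∏ i ∈ insert a A \ S, (n i - 1) / n i
      = (n a - 1) / (∏ i ∈ insert a A, n i) *
          ∑ k ∈ range (m + 1),
            ((b + (m - k)).choose (m - k) : F) * esymVal A (#A - k) (fun i => n i - 1) := by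
  have prod_split (S : Finset α) (hS : S ∈ A.powersetCard m) :
      ∏ i ∈ insert a A \ S, (n i - 1) / n i
        = (n a - 1) / (∏ i ∈ insert a A, n i) *
            ((∏ i ∈ S, n i) * ∏ i ∈ A \ S, (n i - 1)) := by
    have hSA : S ⊆ A := (mem_powersetCard.mp hS).1
    rw [insert_sdiff_of_notMem _ (fun h => ha (hSA h)),
      prod_insert (fun h => ha (mem_sdiff.mp h).1), prod_insert ha,
      prod_sdiff_div_eq hSA _ fun i hi => hn i (mem_insert_of_mem (hSA hi)),
      div_mul_div_comm, mul_div_right_comm]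
  have cleared := sum_powersetCard_prod_add_one_mul_prod_sdiff (A := A) (m := m) (by lia)
    (fun i => n i - 1)
  simp only [sub_add_cancel] at cleared
  rw [sum_congr rfl prod_split, ← mul_sum, cleared]
  congr 1
  refine sum_congr rfl fun k hk => ?_
  rw [hA, Nat.add_sub_assoc (mem_range_succ_iff.mp hk)]

/-- Proposition 5.12 (the summation over all `S`), in the case `ℓ = b+m+1`. -/
theorem sum_over_S_eq_top (b m ℓ : ℕ) (hm : 1 ≤ m) (hℓ : ℓ = b + m + 1)
    (n : ℕ → ℕ) (hn : ∀ i ∈ Finset.Icc 1 ℓ, 0 < n i) :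
    ∑ S ∈ (Finset.Icc 1 (b + m)).powersetCard m,
        ∏ i ∈ Finset.Icc 1 ℓ \ S, ((n i : ℚ) - 1) / (n i : ℚ)
      = ((n ℓ : ℚ) - 1) / (∏ i ∈ Finset.Icc 1 ℓ, (n i : ℚ)) *
          ∑ k ∈ Finset.range (m + 1),
            poch ((b : ℚ) + 1) (m - k) / (Nat.factorial (m - k)) *
              esymVal (Finset.Icc 1 (ℓ - 1)) (ℓ - 1 - k) (fun i => (n i : ℚ) - 1) := by
  subst hℓ
  have hIcc := insert_Icc_right_eq_Icc_add_one (show 1 ≤ b + m + 1 by lia)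
  simpa [poch_natCast_add_one_div_factorial, hIcc] using
    sum_over_S_eq_top_general (A := Icc 1 (b + m)) (a := b + m + 1) (by simp) (by simp)
      (fun i => (n i : ℚ)) fun i hi => Nat.cast_ne_zero.mpr (hn i (hIcc ▸ hi)).ne'

end
end
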